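/- arXiv:1911.01061 — 3 statements merged into one kernel-verified Lean document; each statement's English description precedes it below -/
import Mathlib

section
/- Let d ∈ ℝ^n have all entries strictly positive and let x, y ∈ ℝ^n. Then x ≺_d y if and only if Σ_{j=1}^n x_j = Σ_{j=1}^n y_j and for every index i = 1, …, n one has ‖x − (y_i/d_i)·d‖₁ ≤ ‖y − (y_i/d_i)·d‖₁. -/
/-!
The pair `(x, d)` is regarded as the discrete measure with mass `d i` at the point `x i / d i`.
A stochastic matrix carrying `(y, d)` to `(x, d)` is a mean-preserving transport between two such
measures, and by Hahn–Banach one exists as soon as `∑ i, d i * φ (x i / d i)` is bounded by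
`∑ i, d i * φ (y i / d i)` for every convex `φ`. It suffices to test this on the kinks
`|t - y k / d k|`: interpolating `φ` linearly at the points `y k / d k` gives a sum of an affine
function and of nonnegative multiples of the positive parts `(t - y k / d k)⁺`, which equals `φ` at
these points and dominates `φ` between them. The extreme kinks force every `x i / d i` to lie
between two of these points.
-/

/-- A matrix is `d`-stochastic if it has nonnegative entries, each column sums to one,
and it fixes the vector `d`. -/
def IsDStochastic {n : ℕ} (d : Fin n → ℝ) (A : Matrix (Fin n) (Fin n) ℝ) : Prop :=
  (∀ i j, 0 ≤ A i j) ∧ (∀ j, ∑ i, A i j = 1) ∧ A.mulVec d = d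

/-- `x` is `d`-majorized by `y` if some `d`-stochastic matrix maps `y` to `x`. -/
def DMaj {n : ℕ} (d x y : Fin n → ℝ) : Prop :=
  ∃ A : Matrix (Fin n) (Fin n) ℝ, IsDStochastic d A ∧ x = A.mulVec y

open Set

section HingeInterpolation

variable {𝕜 : Type*} [Field 𝕜] [LinearOrder 𝕜]

/-- The convex piecewise affine functions with kinks in `s`, built from an affine function by
adding nonnegative multiples of hinges `(t - k)⁺` with `k ∈ s`. They serve as interpolants of
convex functions. -/
inductive IsHingeSum (s : Set 𝕜) : (𝕜 → 𝕜) → Prop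
  | affine (a b : 𝕜) : IsHingeSum s fun t ↦ a + b * t
  | add_hinge {ψ : 𝕜 → 𝕜} {c k : 𝕜} (hψ : IsHingeSum s ψ) (hc : 0 ≤ c) (hk : k ∈ s) :
      IsHingeSum s fun t ↦ ψ t + c * (t - k)⁺

theorem IsHingeSum.mono {s s' : Set 𝕜} {ψ : 𝕜 → 𝕜} (hψ : IsHingeSum s ψ) (hs : s ⊆ s') :
    IsHingeSum s' ψ := by
  induction hψ with
  | affine a b => exact .affine a b
  | add_hinge _ hc hk ih => exact .add_hinge ih hc (hs hk)

/-- Linear interpolation of `φ` at the nodes `s`, recorded through the properties that matter for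
convex `φ`: the interpolant `ψ` dominates `φ` between any two nodes and its last affine piece lies
below `φ` to the right of all nodes. To the left of all nodes nothing is required. -/
structure IsHingeInterpolant (φ : 𝕜 → 𝕜) (s : Set 𝕜) (ψ : 𝕜 → 𝕜) : Prop where
  isHingeSum : IsHingeSum s ψ
  eqOn : EqOn ψ φ s
  le_of_mem_Icc : ∀ k ∈ s, ∀ l ∈ s, ∀ t ∈ Icc k l, φ t ≤ ψ t
  le_of_mem_upperBounds : ∀ t ∈ upperBounds s, ψ t ≤ φ t

variable [IsStrictOrderedRing 𝕜]

theorem concaveOn_const_add_mul (a b : 𝕜) : ConcaveOn 𝕜 univ fun t : 𝕜 ↦ a + b * t :=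
  (concaveOn_const a convex_univ).add ((LinearMap.mulLeft 𝕜 b).concaveOn convex_univ)

theorem convexOn_le_concaveOn_of_mem_Icc {S : Set 𝕜} {φ ψ : 𝕜 → 𝕜} (hφ : ConvexOn 𝕜 S φ)
    (hψ : ConcaveOn 𝕜 S ψ) {p q t : 𝕜} (hp : p ∈ S) (hq : q ∈ S) (hφψp : φ p ≤ ψ p)
    (hφψq : φ q ≤ ψ q) (ht : t ∈ Icc p q) : φ t ≤ ψ t := by
  have hmax := (hφ.sub hψ).le_on_segment hp hq (Icc_subset_segment ht)
  exact sub_nonpos.1 (hmax.trans (max_le (sub_nonpos.2 hφψp) (sub_nonpos.2 hφψq)))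

theorem concaveOn_le_convexOn_of_le {S : Set 𝕜} {φ ψ : 𝕜 → 𝕜} (hφ : ConvexOn 𝕜 S φ)
    (hψ : ConcaveOn 𝕜 S ψ) {p q t : 𝕜} (hp : p ∈ S) (ht : t ∈ S) (hpq : p < q) (hqt : q ≤ t)
    (hφψp : φ p ≤ ψ p) (hψφq : ψ q ≤ φ q) : ψ t ≤ φ t := by
  have hmono : (φ - ψ) p ≤ (φ - ψ) q := (sub_nonpos.2 hφψp).trans (sub_nonneg.2 hψφq)
  exact sub_nonneg.1 <|
    (sub_nonneg.2 hψφq).trans ((hφ.sub hψ).le_right_of_left_le'' hp ht hpq hqt hmono)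

theorem IsHingeSum.concaveOn_upperBounds {s : Set 𝕜} {ψ : 𝕜 → 𝕜} (hψ : IsHingeSum s ψ) :
    ConcaveOn 𝕜 (upperBounds s) ψ := by
  have hconvex : Convex 𝕜 (upperBounds s) := by
    have hupper : IsUpperSet (upperBounds s) := fun _ _ hle ht ↦ upperBounds_mono_mem hle ht
    exact hupper.ordConnected.convex
  have haffine (a b : 𝕜) : ConcaveOn 𝕜 (upperBounds s) fun t ↦ a + b * t :=
    (concaveOn_const_add_mul a b).subset (subset_univ _) hconvex
  induction hψ with
  | affine a b => exact haffine a b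
  | @add_hinge ψ c k _ _ hk ih =>
    refine ih.add ((haffine (-(c * k)) c).congr fun t ht ↦ ?_)
    simp only [posPart_of_nonneg (sub_nonneg.2 (ht hk))]
    ring

/-- The chord of `φ` through `q - 1` and `q` plays the role of a tangent line at `q`. -/
theorem exists_isHingeInterpolant_singleton {φ : 𝕜 → 𝕜} (hφ : ConvexOn 𝕜 univ φ) (q : 𝕜) :
    ∃ ψ, IsHingeInterpolant φ {q} ψ := by
  set b := φ q - φ (q - 1)
  refine ⟨fun t ↦ (φ q - b * q) + b * t, .affine _ _, ?_, ?_, fun t ht ↦ ?_⟩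
  · simp [EqOn]
  · rintro _ rfl _ rfl t ht
    obtain rfl : t = _ := by simpa using ht
    simp
  · refine concaveOn_le_convexOn_of_le hφ (concaveOn_const_add_mul _ _) (mem_univ (q - 1))
      (mem_univ t) (sub_one_lt q) (ht rfl) (le_of_eq ?_) (le_of_eq ?_) <;> grind

theorem IsHingeInterpolant.insert_of_isGreatest {φ ψ : 𝕜 → 𝕜} (hφ : ConvexOn 𝕜 univ φ) {s : Set 𝕜}
    (hψ : IsHingeInterpolant φ s ψ) {m q : 𝕜} (hm : IsGreatest s m) (hmq : m < q) :
    IsHingeInterpolant φ (insert q s)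
      (fun t ↦ ψ t + (φ q - ψ q) / (q - m) * (t - m)⁺) := by
  set ψ' : 𝕜 → 𝕜 := fun t ↦ ψ t + (φ q - ψ q) / (q - m) * (t - m)⁺
  have hslope : 0 ≤ (φ q - ψ q) / (q - m) :=
    div_nonneg (sub_nonneg.2 (hψ.le_of_mem_upperBounds q fun k hk ↦ (hm.2 hk).trans hmq.le))
      (sub_pos.2 hmq).le
  have hψ'_sum : IsHingeSum s ψ' := hψ.isHingeSum.add_hinge hslope hm.1
  have hψ'_left {t : 𝕜} (ht : t ≤ m) : ψ' t = ψ t := by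
    simp [ψ', posPart_of_nonpos (sub_nonpos.2 ht)]
  have hψ'_m : ψ' m = φ m := (hψ'_left le_rfl).trans (hψ.eqOn hm.1)
  have hψ'_q : ψ' q = φ q := by
    have hne : q - m ≠ 0 := (sub_pos.2 hmq).ne'
    simp [ψ', posPart_of_nonneg (sub_pos.2 hmq).le, hne]
  have hφ_right : ConvexOn 𝕜 (Ici m) φ := hφ.subset (subset_univ _) (convex_Ici m)
  have hψ'_right : ConcaveOn 𝕜 (Ici m) ψ' := hm.upperBounds_eq ▸ hψ'_sum.concaveOn_upperBounds
  have hq_max {l : 𝕜} (hl : l ∈ insert q s) : l ≤ q := by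
    rcases hl with rfl | hl
    exacts [le_rfl, (hm.2 hl).trans hmq.le]
  refine ⟨hψ'_sum.mono (subset_insert q s), ?_, fun k hk l hl t ht ↦ ?_, fun t ht ↦ ?_⟩
  · rintro k (rfl | hk)
    exacts [hψ'_q, (hψ'_left (hm.2 hk)).trans (hψ.eqOn hk)]
  · rcases le_total t m with htm | hmt
    · have hks : k ∈ s := hk.resolve_left ((ht.1.trans htm).trans_lt hmq).ne
      exact (hψ.le_of_mem_Icc k hks m hm.1 t ⟨ht.1, htm⟩).trans_eq (hψ'_left htm).symm
    · exact convexOn_le_concaveOn_of_mem_Icc hφ_right hψ'_right self_mem_Ici hmq.le hψ'_m.ge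
        hψ'_q.ge ⟨hmt, ht.2.trans (hq_max hl)⟩
  · have hqt : q ≤ t := ht (mem_insert q s)
    exact concaveOn_le_convexOn_of_le hφ_right hψ'_right self_mem_Ici (hmq.le.trans hqt) hmq hqt
      hψ'_m.ge hψ'_q.le

theorem exists_isHingeInterpolant {φ : 𝕜 → 𝕜} (hφ : ConvexOn 𝕜 univ φ) {s : Finset 𝕜}
    (hs : s.Nonempty) : ∃ ψ, IsHingeInterpolant φ s ψ := by
  induction s using Finset.induction_on_max with
  | empty => exact absurd hs Finset.not_nonempty_empty
  | insert q s hq ih =>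
    rcases s.eq_empty_or_nonempty with rfl | hs'
    · simpa using exists_isHingeInterpolant_singleton hφ q
    · obtain ⟨ψ, hψ⟩ := ih hs'
      have hmax := s.isGreatest_max' hs'
      rw [Finset.coe_insert]
      exact ⟨_, hψ.insert_of_isGreatest hφ hmax (hq _ hmax.1)⟩

end HingeInterpolation

section ConvexOrder

variable {𝕜 ι κ : Type*} [Field 𝕜] [LinearOrder 𝕜] [IsStrictOrderedRing 𝕜] [Fintype ι] [Fintype κ]
  {w p : ι → 𝕜} {v q : κ → 𝕜}

theorem sum_mul_abs_div_sub (hw : ∀ i, 0 < w i) (x : ι → 𝕜) (t : 𝕜) :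
    ∑ i, w i * |x i / w i - t| = ∑ i, |x i - t * w i| := by
  refine Finset.sum_congr rfl fun i _ ↦ ?_
  rw [← abs_of_pos (hw i), ← abs_mul, abs_of_pos (hw i), mul_sub, mul_div_cancel₀ _ (hw i).ne',
    mul_comm t]

theorem two_mul_sum_mul_posPart_sub (w p : ι → 𝕜) (c : 𝕜) :
    2 * ∑ i, w i * (p i - c)⁺ = ∑ i, w i * |p i - c| + (∑ i, w i * p i - c * ∑ i, w i) := by
  simp only [Finset.mul_sum, ← Finset.sum_sub_distrib, ← Finset.sum_add_distrib]
  refine Finset.sum_congr rfl fun i _ ↦ ?_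
  have htwo : p i - c + |p i - c| = 2 * (p i - c)⁺ := by
    rw [add_abs_eq_two_nsmul_posPart, two_nsmul, two_mul]
  linear_combination -w i * htwo

theorem sum_mul_posPart_sub_le (hmass : ∑ i, w i = ∑ j, v j)
    (hmean : ∑ i, w i * p i = ∑ j, v j * q j) {c : 𝕜}
    (hc : ∑ i, w i * |p i - c| ≤ ∑ j, v j * |q j - c|) :
    ∑ i, w i * (p i - c)⁺ ≤ ∑ j, v j * (q j - c)⁺ := by
  have hp := two_mul_sum_mul_posPart_sub w p c
  have hq := two_mul_sum_mul_posPart_sub v q c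
  rw [hmass, hmean] at hp
  linarith

theorem le_of_forall_le_of_sum_mul_abs_sub_le (hw : ∀ i, 0 ≤ w i) (hmass : ∑ i, w i = ∑ j, v j)
    (hmean : ∑ i, w i * p i = ∑ j, v j * q j) {c : 𝕜}
    (hc : ∑ i, w i * |p i - c| ≤ ∑ j, v j * |q j - c|) (hq : ∀ j, q j ≤ c) {i : ι} (hi : 0 < w i) :
    p i ≤ c := by
  have hterm (i) : 0 ≤ w i * (p i - c)⁺ := mul_nonneg (hw i) (posPart_nonneg _)
  have hsum : ∑ i, w i * (p i - c)⁺ ≤ 0 :=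
    (sum_mul_posPart_sub_le hmass hmean hc).trans_eq <|
      Finset.sum_eq_zero fun j _ ↦ by rw [posPart_of_nonpos (sub_nonpos.2 (hq j)), mul_zero]
  have hzero : w i * (p i - c)⁺ ≤ 0 :=
    (Finset.single_le_sum (fun i _ ↦ hterm i) (Finset.mem_univ i)).trans hsum
  exact sub_nonpos.1 (posPart_eq_zero.1 ((nonpos_of_mul_nonpos_right hzero hi).antisymm
    (posPart_nonneg _)))

theorem ge_of_forall_ge_of_sum_mul_abs_sub_le (hw : ∀ i, 0 ≤ w i) (hmass : ∑ i, w i = ∑ j, v j)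
    (hmean : ∑ i, w i * p i = ∑ j, v j * q j) {c : 𝕜}
    (hc : ∑ i, w i * |p i - c| ≤ ∑ j, v j * |q j - c|) (hq : ∀ j, c ≤ q j) {i : ι} (hi : 0 < w i) :
    c ≤ p i := by
  refine neg_le_neg_iff.1 (le_of_forall_le_of_sum_mul_abs_sub_le (p := fun i ↦ -p i)
    (q := fun j ↦ -q j) hw hmass ?_ ?_ (fun j ↦ neg_le_neg (hq j)) hi)
  · simpa only [mul_neg, Finset.sum_neg_distrib, neg_inj] using hmean
  · simpa only [neg_sub_neg, abs_sub_comm c] using hc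

theorem IsHingeSum.sum_mul_le {s : Set 𝕜} {ψ : 𝕜 → 𝕜} (hψ : IsHingeSum s ψ)
    (hmass : ∑ i, w i = ∑ j, v j) (hmean : ∑ i, w i * p i = ∑ j, v j * q j)
    (hs : ∀ c ∈ s, ∑ i, w i * |p i - c| ≤ ∑ j, v j * |q j - c|) :
    ∑ i, w i * ψ (p i) ≤ ∑ j, v j * ψ (q j) := by
  induction hψ with
  | affine a b =>
    refine le_of_eq ?_
    simp only [mul_add, Finset.sum_add_distrib, ← Finset.sum_mul, mul_left_comm _ b,
      ← Finset.mul_sum, hmass, hmean]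
  | @add_hinge ψ c k _ hc hk ih =>
    simp only [mul_add, Finset.sum_add_distrib, mul_left_comm _ c, ← Finset.mul_sum]
    gcongr ?_ + c * ?_
    exact sum_mul_posPart_sub_le hmass hmean (hs k hk)

theorem sum_mul_le_of_convexOn [Nonempty κ] {φ : 𝕜 → 𝕜} (hφ : ConvexOn 𝕜 univ φ) (hw : ∀ i, 0 ≤ w i)
    (hmass : ∑ i, w i = ∑ j, v j) (hmean : ∑ i, w i * p i = ∑ j, v j * q j)
    (habs : ∀ k, ∑ i, w i * |p i - q k| ≤ ∑ j, v j * |q j - q k|) :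
    ∑ i, w i * φ (p i) ≤ ∑ j, v j * φ (q j) := by
  obtain ⟨ψ, hψ⟩ := exists_isHingeInterpolant hφ (Finset.univ_nonempty.image q)
  rw [Finset.coe_image, Finset.coe_univ, image_univ] at hψ
  obtain ⟨k, hk⟩ := Finite.exists_min q
  obtain ⟨l, hl⟩ := Finite.exists_max q
  have hdom (i) : w i * φ (p i) ≤ w i * ψ (p i) := by
    rcases (hw i).eq_or_lt with hi | hi
    · simp only [← hi, zero_mul, le_refl]
    · have hkp := ge_of_forall_ge_of_sum_mul_abs_sub_le hw hmass hmean (habs k) hk hi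
      have hpl := le_of_forall_le_of_sum_mul_abs_sub_le hw hmass hmean (habs l) hl hi
      exact mul_le_mul_of_nonneg_left
        (hψ.le_of_mem_Icc _ (mem_range_self k) _ (mem_range_self l) _ ⟨hkp, hpl⟩) hi.le
  calc ∑ i, w i * φ (p i) ≤ ∑ i, w i * ψ (p i) := Finset.sum_le_sum fun i _ ↦ hdom i
    _ ≤ ∑ j, v j * ψ (q j) := hψ.isHingeSum.sum_mul_le hmass hmean (forall_mem_range.2 habs)
    _ = ∑ j, v j * φ (q j) := Finset.sum_congr rfl fun j _ ↦ by rw [hψ.eqOn (mem_range_self j)]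

end ConvexOrder

section Transport

variable {ι κ F : Type*} [Fintype ι] [Fintype κ] [AddCommGroup F] [Module ℝ F]

theorem convexOn_apply_one_mk (f : ℝ × F →ₗ[ℝ] ℝ) : ConvexOn ℝ univ fun z ↦ f (1, z) := by
  refine ⟨convex_univ, fun z _ z' _ a b _ _ hab ↦ le_of_eq ?_⟩
  rw [← map_smul, ← map_smul, ← map_add]
  simp [hab]

variable [TopologicalSpace F] [IsTopologicalAddGroup F] [ContinuousSMul ℝ F]
  [LocallyConvexSpace ℝ F] [T2Space F]

theorem exists_stochastic_sum_smul_eq (X : ι → F) (Y : κ → F)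
    (h : ∀ f : ι → StrongDual ℝ F, ∃ g : κ → ι, ∑ i, f i (X i) ≤ ∑ j, f (g j) (Y j)) :
    ∃ A : Matrix ι κ ℝ, (∀ j, A.col j ∈ stdSimplex ℝ ι) ∧ ∀ i, ∑ j, A i j • Y j = X i := by
  classical
  let T : (κ → ι → ℝ) →ₗ[ℝ] ι → F :=
    { toFun := fun M i ↦ ∑ j, M j i • Y j
      map_add' := fun M N ↦ by ext i; simp [add_smul, Finset.sum_add_distrib]
      map_smul' := fun c M ↦ by ext i; simp [mul_smul, Finset.smul_sum] }
  let K : Set (κ → ι → ℝ) := univ.pi fun _ ↦ stdSimplex ℝ ι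
  have hTK_convex : Convex ℝ (T '' K) :=
    (convex_pi fun _ _ ↦ convex_stdSimplex ℝ ι).linear_image T
  have hTK_closed : IsClosed (T '' K) :=
    ((isCompact_univ_pi fun _ ↦ isCompact_stdSimplex ℝ ι).image
      T.continuous_of_finiteDimensional).isClosed
  suffices hX : X ∈ T '' K by
    obtain ⟨M, hM, hMX⟩ := hX
    exact ⟨.of fun i j ↦ M j i, fun j ↦ hM j (mem_univ j), congrFun hMX⟩
  by_contra hX
  obtain ⟨L, u, hL_lt, hL_gt⟩ := geometric_hahn_banach_closed_point hTK_convex hTK_closed hX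
  let f : ι → StrongDual ℝ F := fun i ↦ L.comp (ContinuousLinearMap.single ℝ (fun _ ↦ F) i)
  have hL (Z : ι → F) : L Z = ∑ i, f i (Z i) :=
    (ContinuousLinearMap.sum_comp_single ℝ (fun _ ↦ F) L Z).symm
  obtain ⟨g, hg⟩ := h f
  have hg_mem : (fun j ↦ Pi.single (g j) 1) ∈ K := fun j _ ↦ single_mem_stdSimplex ℝ (g j)
  have hLg : L (T fun j ↦ Pi.single (g j) 1) = ∑ j, f (g j) (Y j) := by
    simp only [hL, T, LinearMap.coe_mk, AddHom.coe_mk, map_sum, map_smul]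
    rw [Finset.sum_comm]
    simp [Pi.single_apply]
  linarith [hL X, hL_lt _ (mem_image_of_mem T hg_mem)]

theorem exists_stochastic_of_forall_convexOn_sum_le [Nonempty ι] {w : ι → ℝ}
    (hw : ∀ i, 0 ≤ w i) (v : κ → ℝ) (p : ι → F) (q : κ → F)
    (h : ∀ φ : F → ℝ, ConvexOn ℝ univ φ → ∑ i, w i * φ (p i) ≤ ∑ j, v j * φ (q j)) :
    ∃ A : Matrix ι κ ℝ, (∀ j, A.col j ∈ stdSimplex ℝ ι) ∧ A.mulVec v = w ∧
      ∀ i, ∑ j, A i j • v j • q j = w i • p i := by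
  have hdual (f : ι → StrongDual ℝ (ℝ × F)) :
      ∃ g : κ → ι, ∑ i, f i (w i • (1, p i)) ≤ ∑ j, f (g j) (v j • (1, q j)) := by
    let φ : F → ℝ := Finset.univ.sup' Finset.univ_nonempty fun i z ↦ f i (1, z)
    have hφ_convex : ConvexOn ℝ univ φ :=
      Finset.sup'_induction _ _ (fun _ h₁ _ h₂ ↦ h₁.sup h₂) fun i _ ↦
        convexOn_apply_one_mk (f i : ℝ × F →ₗ[ℝ] ℝ)
    have hle (i z) : f i (1, z) ≤ φ z :=
      Finset.le_sup' (fun i z ↦ f i ((1 : ℝ), z)) (Finset.mem_univ i) z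
    have hmax (j) : ∃ i, φ (q j) = f i (1, q j) := by
      simpa [φ] using Finset.exists_mem_eq_sup' Finset.univ_nonempty fun i ↦ f i ((1 : ℝ), q j)
    choose g hg using hmax
    refine ⟨g, ?_⟩
    simp only [map_smul, smul_eq_mul]
    calc ∑ i, w i * f i (1, p i) ≤ ∑ i, w i * φ (p i) :=
          Finset.sum_le_sum fun i _ ↦ mul_le_mul_of_nonneg_left (hle i _) (hw i)
      _ ≤ ∑ j, v j * φ (q j) := h φ hφ_convex
      _ = ∑ j, v j * f (g j) (1, q j) := by simp only [hg]
  obtain ⟨A, hA, hAX⟩ := exists_stochastic_sum_smul_eq _ _ hdual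
  refine ⟨A, hA, funext fun i ↦ ?_, fun i ↦ ?_⟩
  · simpa [Prod.fst_sum, Matrix.mulVec, dotProduct] using congrArg Prod.fst (hAX i)
  · simpa [Prod.snd_sum] using congrArg Prod.snd (hAX i)

end Transport

section Stochastic

variable {ι κ R : Type*} [Fintype ι] [Fintype κ]

theorem sum_mulVec_of_forall_sum_eq_one [NonAssocSemiring R] {A : Matrix ι κ R}
    (hA : ∀ j, ∑ i, A i j = 1) (y : κ → R) : ∑ i, A.mulVec y i = ∑ j, y j := by
  simp only [Matrix.mulVec, dotProduct]
  rw [Finset.sum_comm]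
  simp only [← Finset.sum_mul, hA, one_mul]

theorem sum_abs_mulVec_le [Ring R] [LinearOrder R] [IsStrictOrderedRing R] {A : Matrix ι κ R}
    (hA : ∀ j, ∑ i, |A i j| ≤ 1) (y : κ → R) : ∑ i, |A.mulVec y i| ≤ ∑ j, |y j| :=
  calc ∑ i, |A.mulVec y i| ≤ ∑ i, ∑ j, |A i j| * |y j| :=
        Finset.sum_le_sum fun i _ ↦
          (Finset.abs_sum_le_sum_abs _ _).trans_eq (by simp only [abs_mul])
    _ = ∑ j, (∑ i, |A i j|) * |y j| := by rw [Finset.sum_comm]; simp only [Finset.sum_mul]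
    _ ≤ ∑ j, |y j| :=
        Finset.sum_le_sum fun j _ ↦ mul_le_of_le_one_left (abs_nonneg _) (hA j)

theorem sum_abs_sub_mulVec_le [CommRing R] [LinearOrder R] [IsStrictOrderedRing R]
    {A : Matrix ι κ R} (hA : ∀ j, A.col j ∈ stdSimplex R ι) (e y : κ → R) (t : R) :
    ∑ i, |A.mulVec y i - t * A.mulVec e i| ≤ ∑ j, |y j - t * e j| := by
  have hcol (j) : ∑ i, |A i j| ≤ 1 :=
    (Finset.sum_congr rfl fun i _ ↦ abs_of_nonneg ((hA j).1 i)).trans_le (hA j).2.le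
  simpa [Matrix.mulVec_sub, Matrix.mulVec_smul] using sum_abs_mulVec_le hcol (y - t • e)

end Stochastic

section RelativeMajorization

theorem sum_pos_iff_nonempty {ι R : Type*} [Fintype ι] [AddCommMonoid R] [PartialOrder R]
    [IsOrderedCancelAddMonoid R] {d : ι → R} (hd : ∀ i, 0 < d i) :
    0 < ∑ i, d i ↔ Nonempty ι := by
  refine ⟨fun h ↦ ?_, fun _ ↦ Finset.sum_pos (fun i _ ↦ hd i) Finset.univ_nonempty⟩
  obtain ⟨i, -⟩ := Finset.nonempty_of_sum_ne_zero h.ne'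
  exact ⟨i⟩

variable {ι κ : Type*} [Fintype ι] [Fintype κ]

theorem exists_stochastic_of_sum_abs_sub_le [Nonempty ι] [Nonempty κ] {d x : ι → ℝ} {e y : κ → ℝ}
    (hd : ∀ i, 0 < d i) (he : ∀ j, 0 < e j) (hde : ∑ i, d i = ∑ j, e j)
    (hxy : ∑ i, x i = ∑ j, y j)
    (habs : ∀ k, ∑ i, |x i - (y k / e k) * d i| ≤ ∑ j, |y j - (y k / e k) * e j|) :
    ∃ A : Matrix ι κ ℝ, (∀ j, A.col j ∈ stdSimplex ℝ ι) ∧ A.mulVec e = d ∧ A.mulVec y = x := by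
  have hx (i) : d i * (x i / d i) = x i := mul_div_cancel₀ _ (hd i).ne'
  have hy (j) : e j * (y j / e j) = y j := mul_div_cancel₀ _ (he j).ne'
  obtain ⟨A, hA, hAe, hAy⟩ := exists_stochastic_of_forall_convexOn_sum_le (fun i ↦ (hd i).le) e
    (fun i ↦ x i / d i) (fun j ↦ y j / e j) fun φ hφ ↦
      sum_mul_le_of_convexOn hφ (fun i ↦ (hd i).le) hde (by simpa only [hx, hy] using hxy)
        fun k ↦ by simpa only [sum_mul_abs_div_sub hd, sum_mul_abs_div_sub he] using habs k
  exact ⟨A, hA, hAe, funext fun i ↦ by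
    simpa only [smul_eq_mul, hx, hy, Matrix.mulVec, dotProduct] using hAy i⟩

theorem stmt3_general {d x : ι → ℝ} {e y : κ → ℝ} (hd : ∀ i, 0 < d i) (he : ∀ j, 0 < e j) :
    (∃ A : Matrix ι κ ℝ,
        ((∀ i j, 0 ≤ A i j) ∧ (∀ j, ∑ i, A i j = 1) ∧ A.mulVec e = d) ∧ x = A.mulVec y) ↔
      (∑ i, d i = ∑ j, e j) ∧ (∑ i, x i = ∑ j, y j) ∧
      ∀ k, ∑ i, |x i - (y k / e k) * d i| ≤ ∑ j, |y j - (y k / e k) * e j| := by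
  constructor
  · rintro ⟨A, ⟨hA_nonneg, hA_sum, rfl⟩, rfl⟩
    exact ⟨sum_mulVec_of_forall_sum_eq_one hA_sum e, sum_mulVec_of_forall_sum_eq_one hA_sum y,
      fun k ↦ sum_abs_sub_mulVec_le (fun j ↦ ⟨fun i ↦ hA_nonneg i j, hA_sum j⟩) e y _⟩
  · rintro ⟨hde, hxy, habs⟩
    have hικ : Nonempty ι ↔ Nonempty κ := by
      rw [← sum_pos_iff_nonempty hd, ← sum_pos_iff_nonempty he, hde]
    rcases isEmpty_or_nonempty ι with hι | hι
    · have hκ : IsEmpty κ := by simpa using hικ.not.1 (not_nonempty_iff.2 hι)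
      exact ⟨0, ⟨isEmptyElim, isEmptyElim, Subsingleton.elim _ _⟩, Subsingleton.elim _ _⟩
    · have hκ : Nonempty κ := hικ.1 hι
      obtain ⟨A, hA, hAe, hAy⟩ := exists_stochastic_of_sum_abs_sub_le hd he hde hxy habs
      exact ⟨A, ⟨fun i j ↦ (hA j).1 i, fun j ↦ (hA j).2, hAe⟩, hAy.symm⟩

end RelativeMajorization

theorem stmt3 {n : ℕ} (d x y : Fin n → ℝ) (hd : ∀ i, 0 < d i) :
    DMaj d x y ↔
      (∑ j, x j = ∑ j, y j) ∧
      ∀ i : Fin n, ∑ j, |x j - (y i / d i) * d j| ≤ ∑ j, |y j - (y i / d i) * d j| :=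
  (stmt3_general hd hd).trans (and_iff_right rfl)
end

section
/- Let y ∈ ℝ^n have nonnegative entries with y_1 ≤ y_2 ≤ … ≤ y_n. Then for every x ∈ ℝ^n, x is majorized by y if and only if x is d-majorized by y for every d ∈ ℝ^n with strictly positive entries satisfying d_1 ≥ d_2 ≥ … ≥ d_n. -/
/-- Classical majorization: `x ≺ y` iff a doubly stochastic matrix maps `y` to `x`. -/
def Maj {n : ℕ} (x y : Fin n → ℝ) : Prop :=
  ∃ A : Matrix (Fin n) (Fin n) ℝ, (∀ i j, 0 ≤ A i j) ∧ (∀ j, ∑ i, A i j = 1) ∧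
    (∀ i, ∑ j, A i j = 1) ∧ x = A.mulVec y

/-!
By Birkhoff's theorem the vectors majorized by `y` form the convex hull of the rearrangements of
`y`, and the vectors `d`-majorized by `y` form a convex set. So it suffices to reach every
rearrangement of `y`, which bubble sort does one inversion at a time: if `i < j` and `y i ≤ y j`,
then, since `d j ≤ d i` and `0 ≤ y i`, a two-coordinate `d`-stochastic matrix moves exactly
`y j - y i` from coordinate `j` to coordinate `i`. Conversely, for `d = 1` the `d`-stochastic
matrices are the doubly stochastic ones.
-/

section WeightedTTransform

open Equiv Matrix

variable {ι R : Type*} [DecidableEq ι] [CommRing R]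

theorem comp_swap_eq_add_smul (w : ι → R) (i j : ι) :
    w ∘ swap i j = w + (w j - w i) • (Pi.single i 1 - Pi.single j 1) := by
  ext k
  rcases eq_or_ne k i with rfl | hki
  · rcases eq_or_ne k j with rfl | hkj <;> simp [*]
  · rcases eq_or_ne k j with rfl | hkj
    · simp [hki]
    · simp [hki, hkj, swap_apply_of_ne_of_ne]

/-- The weighted analogue of a T-transform: the matrix that sends `w` to the vector obtained by
moving the amount `s * (d i * w j - d j * w i)` from coordinate `j` to coordinate `i`. This amount
vanishes at `w = d`. -/
def weightedTTransform (d : ι → R) (i j : ι) (s : R) : Matrix ι ι R :=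
  1 + s • vecMulVec (Pi.single i 1 - Pi.single j 1) (d i • Pi.single j 1 - d j • Pi.single i 1)

variable [Fintype ι]

theorem weightedTTransform_mulVec (d : ι → R) (i j : ι) (s : R) (w : ι → R) :
    weightedTTransform d i j s *ᵥ w =
      w + (s * (d i * w j - d j * w i)) • (Pi.single i 1 - Pi.single j 1) := by
  simp only [weightedTTransform, add_mulVec, one_mulVec, smul_mulVec, vecMulVec_mulVec,
    sub_dotProduct, smul_dotProduct, single_one_dotProduct, smul_eq_mul, op_smul_eq_smul,
    smul_smul]

theorem weightedTTransform_mulVec_self (d : ι → R) (i j : ι) (s : R) :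
    weightedTTransform d i j s *ᵥ d = d := by
  rw [weightedTTransform_mulVec, mul_comm (d j), sub_self, mul_zero, zero_smul, add_zero]

theorem weightedTTransform_mulVec_single_left (d : ι → R) {i j : ι} (hij : i ≠ j) (s : R) :
    weightedTTransform d i j s *ᵥ Pi.single i 1 =
      (1 - s * d j) • Pi.single i 1 + (s * d j) • Pi.single j 1 := by
  rw [weightedTTransform_mulVec, Pi.single_eq_same, Pi.single_eq_of_ne hij.symm]
  module

theorem weightedTTransform_mulVec_single_right (d : ι → R) {i j : ι} (hij : i ≠ j) (s : R) :
    weightedTTransform d i j s *ᵥ Pi.single j 1 =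
      (1 - s * d i) • Pi.single j 1 + (s * d i) • Pi.single i 1 := by
  rw [weightedTTransform_mulVec, Pi.single_eq_same, Pi.single_eq_of_ne hij]
  module

theorem one_vecMul_weightedTTransform (d : ι → R) (i j : ι) (s : R) :
    1 ᵥ* weightedTTransform d i j s = 1 := by
  simp [weightedTTransform, vecMul_add, vecMul_smul, vecMul_vecMulVec]

theorem weightedTTransform_mem_colStochastic [PartialOrder R] [IsOrderedRing R] {d : ι → R}
    {i j : ι} {s : R} (hi : 0 ≤ s * d i) (hj : 0 ≤ s * d j) (hi' : s * d i ≤ 1)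
    (hj' : s * d j ≤ 1) : weightedTTransform d i j s ∈ colStochastic R ι := by
  have hsingle (k : ι) : (0 : ι → R) ≤ Pi.single k 1 := Pi.single_nonneg.2 zero_le_one
  have hcol (l : ι) : 0 ≤ weightedTTransform d i j s *ᵥ Pi.single l 1 := by
    rcases eq_or_ne i j with rfl | hij
    · rw [weightedTTransform_mulVec]
      simp
    rcases eq_or_ne l i with rfl | hli
    · rw [weightedTTransform_mulVec_single_left d hij]
      exact add_nonneg (smul_nonneg (sub_nonneg.2 hj') (hsingle l)) (smul_nonneg hj (hsingle j))
    rcases eq_or_ne l j with rfl | hlj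
    · rw [weightedTTransform_mulVec_single_right d hij]
      exact add_nonneg (smul_nonneg (sub_nonneg.2 hi') (hsingle l)) (smul_nonneg hi (hsingle i))
    · rw [weightedTTransform_mulVec]
      simp [hli.symm, hlj.symm]
  refine ⟨fun k l => ?_, one_vecMul_weightedTTransform d i j s⟩
  simpa only [mulVec_single_one, col_apply, Pi.zero_apply] using hcol l k

end WeightedTTransform

section DMajorization

open Equiv Matrix

variable {n : ℕ} {d x y z : Fin n → ℝ}

theorem isDStochastic_iff_mem_colStochastic {A : Matrix (Fin n) (Fin n) ℝ} :
    IsDStochastic d A ↔ A ∈ colStochastic ℝ (Fin n) ∧ A *ᵥ d = d := by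
  rw [mem_colStochastic_iff_sum, and_assoc, IsDStochastic]

theorem isDStochastic_one_iff_mem_doublyStochastic {A : Matrix (Fin n) (Fin n) ℝ} :
    IsDStochastic 1 A ↔ A ∈ doublyStochastic ℝ (Fin n) := by
  rw [isDStochastic_iff_mem_colStochastic, and_comm,
    mem_doublyStochastic_iff_mem_rowStochastic_and_mem_colStochastic]
  exact ⟨fun h => ⟨⟨h.2.1, h.1⟩, h.2⟩, fun h => ⟨h.1.2, h.2⟩⟩

theorem convex_setOf_isDStochastic (d : Fin n → ℝ) : Convex ℝ {A | IsDStochastic d A} := by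
  have hfix : Convex ℝ {A : Matrix (Fin n) (Fin n) ℝ | A *ᵥ d = d} :=
    (convex_singleton d).linear_preimage ((mulVecBilin ℝ ℝ).flip d)
  simp only [isDStochastic_iff_mem_colStochastic]
  exact convex_colStochastic.inter hfix

theorem DMaj.refl (d y : Fin n → ℝ) : DMaj d y y :=
  ⟨1, isDStochastic_iff_mem_colStochastic.2 ⟨one_mem _, one_mulVec d⟩, (one_mulVec y).symm⟩

theorem DMaj.trans (hxy : DMaj d x y) (hyz : DMaj d y z) : DMaj d x z := by
  obtain ⟨A, hA, rfl⟩ := hxy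
  obtain ⟨B, hB, rfl⟩ := hyz
  rw [isDStochastic_iff_mem_colStochastic] at hA hB
  refine ⟨A * B, isDStochastic_iff_mem_colStochastic.2 ⟨mul_mem hA.1 hB.1, ?_⟩, mulVec_mulVec z A B⟩
  rw [← mulVec_mulVec, hB.2, hA.2]

theorem convex_setOf_dMaj (d y : Fin n → ℝ) : Convex ℝ {x | DMaj d x y} := by
  have himage : {x | DMaj d x y} = (mulVecBilin ℝ ℝ).flip y '' {A | IsDStochastic d A} :=
    Set.ext fun x => exists_congr fun A => and_congr_right' eq_comm
  rw [himage]
  exact (convex_setOf_isDStochastic d).linear_image _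

theorem dMaj_comp_swap {i j : Fin n} (hdi : 0 < d i) (hdj : 0 ≤ d j) (hd : d j ≤ d i)
    (hyi : 0 ≤ y i) (hy : y i ≤ y j) : DMaj d (y ∘ swap i j) y := by
  obtain ⟨s, hs, hsd, hmove⟩ :
      ∃ s, 0 ≤ s ∧ s * d i ≤ 1 ∧ s * (d i * y j - d j * y i) = y j - y i := by
    have hle : (y j - y i) * d i ≤ d i * y j - d j * y i := by
      linarith [mul_le_mul_of_nonneg_right hd hyi]
    have hnum : 0 ≤ (y j - y i) * d i := mul_nonneg (sub_nonneg.2 hy) hdi.le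
    refine ⟨(y j - y i) / (d i * y j - d j * y i),
      div_nonneg (sub_nonneg.2 hy) (hnum.trans hle), ?_, div_mul_cancel_of_imp fun hzero => ?_⟩
    · rw [div_mul_eq_mul_div]
      exact div_le_one_of_le₀ hle (hnum.trans hle)
    · exact (mul_eq_zero_iff_right hdi.ne').1 (hnum.antisymm' (hle.trans_eq hzero))
  refine ⟨weightedTTransform d i j s, isDStochastic_iff_mem_colStochastic.2
    ⟨weightedTTransform_mem_colStochastic (mul_nonneg hs hdi.le) (mul_nonneg hs hdj) hsd
      ((mul_le_mul_of_nonneg_left hd hs).trans hsd), weightedTTransform_mulVec_self d i j s⟩, ?_⟩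
  rw [weightedTTransform_mulVec, hmove, comp_swap_eq_add_smul]

theorem dMaj_comp_sort (hd : ∀ i, 0 < d i) (hda : Antitone d) (hy : ∀ i, 0 ≤ y i) :
    DMaj d y (y ∘ Tuple.sort y) := by
  refine Tuple.bubble_sort_induction' (P := DMaj d y) (DMaj.refl d y)
    fun σ i j hij hlt hσ => hσ.trans ?_
  have hswap : DMaj d ((y ∘ σ ∘ swap i j) ∘ swap i j) (y ∘ σ ∘ swap i j) :=
    dMaj_comp_swap (hd i) (hd j).le (hda hij.le) (hy _) (by simpa using hlt.le)
  simpa [Function.comp_assoc, ← Perm.coe_mul] using hswap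

theorem dMaj_comp_perm (hd : ∀ i, 0 < d i) (hda : Antitone d) (hy0 : ∀ i, 0 ≤ y i)
    (hy : Monotone y) (σ : Perm (Fin n)) : DMaj d (y ∘ σ) y := by
  have hsort : DMaj d (y ∘ σ) ((y ∘ σ) ∘ Tuple.sort (y ∘ σ)) :=
    dMaj_comp_sort hd hda fun i => hy0 (σ i)
  rwa [Tuple.comp_perm_comp_sort_eq_comp_sort, Tuple.sort_eq_refl_iff_monotone.2 hy] at hsort

theorem maj_iff_dMaj_one : Maj x y ↔ DMaj 1 x y := by
  simp only [Maj, DMaj, isDStochastic_one_iff_mem_doublyStochastic, mem_doublyStochastic_iff_sum,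
    and_left_comm, and_assoc]

theorem Maj.mem_convexHull (h : Maj x y) :
    x ∈ convexHull ℝ (Set.range fun σ : Perm (Fin n) => y ∘ σ) := by
  obtain ⟨A, hA, rfl⟩ := maj_iff_dMaj_one.1 h
  rw [isDStochastic_one_iff_mem_doublyStochastic, ← SetLike.mem_coe,
    doublyStochastic_eq_convexHull_permMatrix] at hA
  have himage := Set.mem_image_of_mem ((mulVecBilin ℝ ℝ).flip y) hA
  rw [LinearMap.image_convexHull] at himage
  refine convexHull_mono ?_ himage
  rintro _ ⟨_, ⟨σ, rfl⟩, rfl⟩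
  exact ⟨σ, (permMatrix_mulVec σ).symm⟩

end DMajorization

theorem stmt7 {n : ℕ} (y : Fin n → ℝ) (hy0 : ∀ i, 0 ≤ y i) (hy : Monotone y)
    (x : Fin n → ℝ) :
    Maj x y ↔ ∀ d : Fin n → ℝ, (∀ i, 0 < d i) → Antitone d → DMaj d x y := by
  constructor
  · intro hxy d hd hda
    have hperm : (Set.range fun σ : Equiv.Perm (Fin n) => y ∘ σ) ⊆ {x | DMaj d x y} :=
      Set.range_subset_iff.2 (dMaj_comp_perm hd hda hy0 hy)
    exact convexHull_min hperm (convex_setOf_dMaj d y) hxy.mem_convexHull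
  · intro h
    exact maj_iff_dMaj_one.2 (h 1 (fun _ => one_pos) antitone_const)
end

section
/- Let y ∈ ℝ^n have nonnegative entries and let d ∈ ℝ^n have all entries strictly positive. Suppose y/d and d are similarly ordered, i.e. there exists a permutation σ of {1,…,n} with d_{σ(1)} ≥ … ≥ d_{σ(n)} and y_{σ(1)}/d_{σ(1)} ≥ … ≥ y_{σ(n)}/d_{σ(n)}. Then every x ∈ ℝ^n with x ≺_d y satisfies x ≺ y (classical majorization). -/
/-!
Write `y = r * d` with `r = y / d`. For a `d`-stochastic matrix `A` and a set `T` of `k` indices,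
`∑ i ∈ T, (A y) i = ∑ j, r j * a j`, where the mass `a j = ∑ i ∈ T, A i j * d j` satisfies
`0 ≤ a j ≤ d j` and has total `∑ i ∈ T, d i`, because `A d = d`. If `S` consists of the first `k`
indices in the common order of `d` and `r`, then this total is at most `∑ j ∈ S, d j`, and by the
bathtub principle the weighted mass is largest when `S` is filled up, where it equals
`∑ j ∈ S, y j`. So every sum of `k` entries of `A y` is at most the sum of the first `k` entries of
`y`. Pairing with decreasing weights, by Abel summation no linear functional separates `A y` from
the permutations of `y`; by Hahn-Banach `A y` lies in their convex hull, which by Birkhoff's theorem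
is the set of vectors majorized by `y`.
-/

open Finset Matrix

section TopSet

variable {ι κ R : Type*}

/-- `s` contains the largest values of `r`, with cut-off `t`: the values on `s` are at least `t`,
those off `s` at most `t`. Indices with value exactly `t` may lie on either side, so that `s` can be
an arbitrary initial segment of an ordering of the indices by decreasing `r`. -/
def IsTopSet [LE R] (r : ι → R) (t : R) (s : Finset ι) : Prop :=
  (∀ i ∈ s, t ≤ r i) ∧ ∀ i ∉ s, r i ≤ t

theorem isTopSet_map_Iic [Preorder R] [LinearOrder κ] [LocallyFiniteOrderBot κ] (σ : κ ≃ ι)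
    {r : ι → R} (hr : Antitone (r ∘ σ)) (k : κ) :
    IsTopSet r (r (σ k)) ((Iic k).map σ.toEmbedding) := by
  constructor <;> intro i hi <;> rw [mem_map_equiv, mem_Iic] at hi
  · simpa using hr hi
  · simpa using hr (le_of_not_ge hi)

namespace IsTopSet

variable {r : ι → R} {t : R} {s : Finset ι}

theorem sum_le_sum_of_card_le [AddCommGroup R] [PartialOrder R] [IsOrderedAddMonoid R]
    (hs : IsTopSet r t s) (ht : 0 ≤ t) {u : Finset ι} (hu : #u ≤ #s) :
    ∑ i ∈ u, r i ≤ ∑ i ∈ s, r i := by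
  classical
  rw [← sum_sdiff_le_sum_sdiff]
  calc ∑ i ∈ u \ s, r i
      ≤ #(u \ s) • t := sum_le_card_nsmul _ _ _ fun i hi => hs.2 i (mem_sdiff.1 hi).2
    _ ≤ #(s \ u) • t := nsmul_le_nsmul_left ht (card_sdiff_le_card_sdiff_iff.2 hu)
    _ ≤ ∑ i ∈ s \ u, r i := card_nsmul_le_sum _ _ _ fun i hi => hs.1 i (mem_sdiff.1 hi).1

theorem sum_mul_le_sum_mul [Fintype ι] [CommRing R] [LinearOrder R] [IsStrictOrderedRing R]
    (hs : IsTopSet r t s) (ht : 0 ≤ t) {a e : ι → R} (ha : 0 ≤ a) (hae : a ≤ e)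
    (hsum : ∑ i, a i ≤ ∑ i ∈ s, e i) : ∑ i, r i * a i ≤ ∑ i ∈ s, r i * e i := by
  classical
  have above_cutoff : ∑ i, (r i - t) * a i ≤ ∑ i ∈ s, (r i - t) * e i := by
    rw [← sum_add_sum_compl s, ← add_zero (∑ i ∈ s, (r i - t) * e i)]
    gcongr ?_ + ?_
    · exact sum_le_sum fun i hi => mul_le_mul_of_nonneg_left (hae i) (sub_nonneg.2 (hs.1 i hi))
    · exact sum_nonpos fun i hi => mul_nonpos_of_nonpos_of_nonneg
        (sub_nonpos.2 (hs.2 i (mem_compl.1 hi))) (ha i)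
  have below_cutoff : t * ∑ i, a i ≤ t * ∑ i ∈ s, e i := mul_le_mul_of_nonneg_left hsum ht
  simp only [sub_mul, sum_sub_distrib, ← mul_sum] at above_cutoff
  linarith

end IsTopSet

end TopSet

section DStochastic

variable {n : ℕ} {d r : Fin n → ℝ} {A : Matrix (Fin n) (Fin n) ℝ}

namespace IsDStochastic

theorem mem_colStochastic (hA : IsDStochastic d A) : A ∈ colStochastic ℝ (Fin n) :=
  mem_colStochastic_iff_sum.2 ⟨hA.1, hA.2.1⟩

theorem sum_mulVec_mul_le (hA : IsDStochastic d A) (hd : 0 ≤ d) {S T : Finset (Fin n)} {t u : ℝ}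
    (hdS : IsTopSet d t S) (ht : 0 ≤ t) (hrS : IsTopSet r u S) (hu : 0 ≤ u) (hTS : #T ≤ #S) :
    ∑ i ∈ T, (A *ᵥ (r * d)) i ≤ ∑ j ∈ S, r j * d j := by
  set a : Fin n → ℝ := fun j => (∑ i ∈ T, A i j) * d j with ha_def
  have sum_mulVec_eq (v : Fin n → ℝ) : ∑ i ∈ T, (A *ᵥ (v * d)) i = ∑ j, v j * a j := by
    simp only [ha_def, mulVec, dotProduct, Pi.mul_apply, sum_mul, mul_sum]
    rw [sum_comm]
    exact sum_congr rfl fun j _ => sum_congr rfl fun i _ => by ring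
  have ha : 0 ≤ a := fun j => mul_nonneg (sum_nonneg fun i _ => hA.1 i j) (hd j)
  have had : a ≤ d := fun j => mul_le_of_le_one_left (hd j) <|
    (sum_le_univ_sum_of_nonneg fun i => hA.1 i j).trans_eq (hA.2.1 j)
  have sum_a : ∑ j, a j = ∑ i ∈ T, d i := by
    simpa [hA.2.2] using (sum_mulVec_eq 1).symm
  rw [sum_mulVec_eq]
  exact hrS.sum_mul_le_sum_mul hu ha had (sum_a.trans_le (hdS.sum_le_sum_of_card_le ht hTS))

end IsDStochastic

end DStochastic

section PartialSums

variable {ι R : Type*} [LinearOrder ι] [CommRing R] [LinearOrder R] [IsStrictOrderedRing R]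

theorem mul_sum_le_sum_mul_of_antitoneOn {s : Finset ι} {f z : ι → R} {c : R}
    (hf : AntitoneOn f s) (hc : ∀ i ∈ s, c ≤ f i) (hz : ∀ k ∈ s, 0 ≤ ∑ i ∈ s with i ≤ k, z i) :
    c * ∑ i ∈ s, z i ≤ ∑ i ∈ s, f i * z i := by
  induction s using Finset.induction_on_max generalizing c with
  | empty => simp
  | insert m s hm ih =>
    have hms : m ∉ s := fun h => (hm m h).false
    have hsum : 0 ≤ ∑ i ∈ insert m s, z i := by
      have hle : ∀ i ∈ insert m s, i ≤ m := by
        simpa using fun i hi => (hm i hi).le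
      simpa only [filter_true_of_mem hle] using hz m (mem_insert_self m s)
    have hs : f m * ∑ i ∈ s, z i ≤ ∑ i ∈ s, f i * z i := by
      refine ih (hf.mono (by simp)) (fun i hi => ?_) fun k hk => ?_
      · exact hf (by simp [hi]) (by simp) (hm i hi).le
      · simpa only [filter_insert, (hm k hk).not_ge, if_false] using hz k (mem_insert_of_mem hk)
    calc c * ∑ i ∈ insert m s, z i
        ≤ f m * ∑ i ∈ insert m s, z i :=
          mul_le_mul_of_nonneg_right (hc m (mem_insert_self m s)) hsum
      _ = f m * z m + f m * ∑ i ∈ s, z i := by rw [sum_insert hms, mul_add]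
      _ ≤ f m * z m + ∑ i ∈ s, f i * z i := by gcongr
      _ = ∑ i ∈ insert m s, f i * z i := by rw [sum_insert hms]

theorem dotProduct_le_dotProduct_of_antitone [Fintype ι] [LocallyFiniteOrderBot ι]
    {f a b : ι → R} (hf : Antitone f) (hab : ∀ k, ∑ i ∈ Iic k, a i ≤ ∑ i ∈ Iic k, b i)
    (hsum : ∑ i, a i = ∑ i, b i) : f ⬝ᵥ a ≤ f ⬝ᵥ b := by
  obtain ⟨c, hc⟩ : ∃ c, ∀ i, c ≤ f i := by
    simpa [bddBelow_def] using (Set.finite_range f).bddBelow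
  have := mul_sum_le_sum_mul_of_antitoneOn (s := univ) (z := b - a) (hf.antitoneOn _)
    (fun i _ => hc i) fun k _ => by
      simpa [filter_ge_eq_Iic] using hab k
  simpa [mul_sub, hsum, dotProduct] using this

end PartialSums

section Majorization

theorem mem_convexHull_of_forall_dotProduct_le {ι : Type*} [Fintype ι] {s : Set (ι → ℝ)}
    (hs : s.Finite) {x : ι → ℝ} (hx : ∀ w : ι → ℝ, ∃ v ∈ s, w ⬝ᵥ x ≤ w ⬝ᵥ v) :
    x ∈ convexHull ℝ s := by
  classical
  by_contra hxs
  obtain ⟨f, u, hfs, hfx⟩ := geometric_hahn_banach_closed_point (convex_convexHull ℝ s)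
    (hs.isClosed_convexHull ℝ) hxs
  obtain ⟨w, hw⟩ := (dotProductEquiv ℝ ι).surjective f.toLinearMap
  have hfw (v : ι → ℝ) : f v = w ⬝ᵥ v := (LinearMap.congr_fun hw v).symm
  obtain ⟨v, hvs, hxv⟩ := hx w
  have hfv : f v < u := hfs v (subset_convexHull ℝ s hvs)
  rw [hfw] at hfv hfx
  linarith

variable {n : ℕ} {x y : Fin n → ℝ}

theorem maj_iff_exists_mem_doublyStochastic :
    Maj x y ↔ ∃ A ∈ doublyStochastic ℝ (Fin n), A *ᵥ y = x := by
  simp only [Maj, mem_doublyStochastic_iff_sum]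
  exact exists_congr fun A => by tauto

theorem maj_iff_mem_convexHull_range_perm :
    Maj x y ↔ x ∈ convexHull ℝ (Set.range fun π : Equiv.Perm (Fin n) => y ∘ π) := by
  have hrange : (Set.range fun π : Equiv.Perm (Fin n) => y ∘ π) =
      (mulVecBilin ℝ ℝ).flip y '' {π.permMatrix ℝ | π : Equiv.Perm (Fin n)} := by
    ext; simp [permMatrix_mulVec]
  rw [hrange, ← LinearMap.image_convexHull, ← doublyStochastic_eq_convexHull_permMatrix,
    maj_iff_exists_mem_doublyStochastic]
  rfl

theorem maj_of_forall_sum_Iic_le (σ : Equiv.Perm (Fin n))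
    (hle : ∀ (τ : Equiv.Perm (Fin n)) (k : Fin n),
      ∑ i ∈ Iic k, x (τ i) ≤ ∑ i ∈ Iic k, y (σ i))
    (hsum : ∑ i, x i = ∑ i, y i) : Maj x y := by
  refine maj_iff_mem_convexHull_range_perm.2 <|
    mem_convexHull_of_forall_dotProduct_le (Set.finite_range _) fun w => ?_
  obtain ⟨τ, hτ⟩ : ∃ τ : Equiv.Perm (Fin n), Antitone (w ∘ τ) :=
    ⟨Tuple.sort (-w), fun i j hij => neg_le_neg_iff.1 (Tuple.monotone_sort (-w) hij)⟩
  refine ⟨y ∘ (τ.symm.trans σ), Set.mem_range_self _, ?_⟩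
  calc w ⬝ᵥ x = (w ∘ τ) ⬝ᵥ (x ∘ τ) := (comp_equiv_dotProduct_comp_equiv w x τ).symm
    _ ≤ (w ∘ τ) ⬝ᵥ (y ∘ σ) := dotProduct_le_dotProduct_of_antitone hτ (hle τ) <| by
      simpa only [Function.comp_apply, Equiv.sum_comp] using hsum
    _ = w ⬝ᵥ (y ∘ (τ.symm.trans σ)) := (dotProduct_comp_equiv_symm w (y ∘ σ) τ).symm

end Majorization

theorem stmt19 {n : ℕ} (y d : Fin n → ℝ) (hy : ∀ i, 0 ≤ y i) (hd : ∀ i, 0 < d i)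
    (σ : Equiv.Perm (Fin n)) (hdσ : Antitone fun i => d (σ i))
    (hyd : Antitone fun i => y (σ i) / d (σ i)) :
    ∀ x : Fin n → ℝ, DMaj d x y → Maj x y := by
  rintro x ⟨A, hA, rfl⟩
  refine maj_of_forall_sum_Iic_le σ (fun τ k => ?_)
    (sum_mulVec_of_mem_colStochastic hA.mem_colStochastic)
  have hy_eq : y / d * d = y := funext fun i => div_mul_cancel₀ (y i) (hd i).ne'
  have hsum_le := hA.sum_mulVec_mul_le (fun i => (hd i).le)
    (T := (Iic k).map τ.toEmbedding) (isTopSet_map_Iic σ hdσ k) (hd _).le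
    (isTopSet_map_Iic (r := y / d) σ hyd k) (div_nonneg (hy _) (hd _).le) (by simp)
  simpa [hy_eq, (hd _).ne'] using hsum_le
end
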